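/- arXiv:1705.10155 — 8 statements merged into one kernel-verified Lean document; each statement's English description precedes it below -/
import Mathlib

section
/- Let F = {f_i}_{i∈I} be a K-frame for H and let {g_i}_{i∈I} be a K-dual of F. Then for every subset J ⊆ I (with complement J^c = I \ J) and every f ∈ H, (∑_{i∈J} ⟨f,g_i⟩ · conj(⟨Kf,f_i⟩)) − ‖∑_{i∈J} ⟨f,g_i⟩ f_i‖² = (∑_{i∈J^c} conj(⟨f,g_i⟩) · ⟨Kf,f_i⟩) − ‖∑_{i∈J^c} ⟨f,g_i⟩ f_i‖². -/
/-!
Write `a` and `b` for the sums of `⟪g i, x⟫ • F i` over `J` and `Jᶜ`, so that `K x = a + b`.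
Pulling the inner product out of the series, the left side is `⟪K x, a⟫ - ⟪a, a⟫ = ⟪b, a⟫` and
the right side is `⟪b, K x⟫ - ⟪b, b⟫ = ⟪b, a⟫`.

What has to be justified is the unconditional convergence of the series. It follows from the
Bessel bound on `F`: square-summable coefficients always synthesize a summable family
(`summable_smul_of_bessel`), by the finite estimate `norm_sum_smul_sq_le` and Cauchy's criterion.
-/


/- STATEMENT 0: For a K-frame F with K-dual g, for every J ⊆ I and f ∈ H,
   (∑_{i∈J} ⟨f,g_i⟩ conj⟨Kf,f_i⟩) − ‖∑_{i∈J} ⟨f,g_i⟩ f_i‖²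
     = (∑_{i∈J^c} conj⟨f,g_i⟩ ⟨Kf,f_i⟩) − ‖∑_{i∈J^c} ⟨f,g_i⟩ f_i‖².
   Paper inner ⟨·,·⟩ is linear in the FIRST argument, so ⟨a, b⟩ = ⟪b, a⟫ (Mathlib). -/

open scoped ComplexConjugate

local notation "⟪" x ", " y "⟫" => @inner ℂ _ _ x y

/-- The synthesis operator of a Bessel sequence with bound `B` has squared norm at most `B`,
stated for finite sums. -/
lemma norm_sum_smul_sq_le
    {H : Type*} [NormedAddCommGroup H] [InnerProductSpace ℂ H] {I : Type*} (F : I → H)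
    (B : ℝ) (hB : 0 < B)
    (hFsum : ∀ x : H, Summable fun i => ‖⟪F i, x⟫‖ ^ 2)
    (hF_upper : ∀ x : H, ∑' i, ‖⟪F i, x⟫‖ ^ 2 ≤ B * ‖x‖ ^ 2)
    (c : I → ℂ) (s : Finset I) :
    ‖∑ i ∈ s, c i • F i‖ ^ 2 ≤ B * ∑ i ∈ s, ‖c i‖ ^ 2 := by
  set v := ∑ i ∈ s, c i • F i with hv
  have hS : 0 ≤ ∑ i ∈ s, ‖c i‖ ^ 2 := Finset.sum_nonneg fun i _ => by positivity
  have h1 : ‖v‖ ^ 2 ≤ ∑ i ∈ s, ‖c i‖ * ‖⟪F i, v⟫‖ := by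
    have h : ⟪v, v⟫ = ∑ i ∈ s, c i * ⟪v, F i⟫ := by
      conv_lhs => rw [hv, inner_sum]
      simp only [inner_smul_right, ← hv]
    calc ‖v‖ ^ 2 = ‖⟪v, v⟫‖ := by
          rw [inner_self_eq_norm_sq_to_K]; simp
      _ ≤ ∑ i ∈ s, ‖c i * ⟪v, F i⟫‖ := by rw [h]; exact norm_sum_le _ _
      _ = _ := by simp only [norm_mul, norm_inner_symm v]
  have h2 : ∑ i ∈ s, ‖⟪F i, v⟫‖ ^ 2 ≤ B * ‖v‖ ^ 2 :=
    ((hFsum v).sum_le_tsum s fun i _ => by positivity).trans (hF_upper v)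
  have h3 : (‖v‖ ^ 2) ^ 2 ≤ (B * ∑ i ∈ s, ‖c i‖ ^ 2) * ‖v‖ ^ 2 :=
    calc (‖v‖ ^ 2) ^ 2 ≤ (∑ i ∈ s, ‖c i‖ * ‖⟪F i, v⟫‖) ^ 2 := by gcongr
      _ ≤ (∑ i ∈ s, ‖c i‖ ^ 2) * ∑ i ∈ s, ‖⟪F i, v⟫‖ ^ 2 := Finset.sum_mul_sq_le_sq_mul_sq _ _ _
      _ ≤ (∑ i ∈ s, ‖c i‖ ^ 2) * (B * ‖v‖ ^ 2) := by gcongr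
      _ = _ := by ring
  rcases (sq_nonneg ‖v‖).eq_or_lt with h0 | h0
  · rw [← h0]
    positivity
  · rw [sq (‖v‖ ^ 2)] at h3
    exact le_of_mul_le_mul_right h3 h0

lemma summable_smul_of_bessel
    {H : Type*} [NormedAddCommGroup H] [InnerProductSpace ℂ H] [CompleteSpace H]
    {I : Type*} (F : I → H) (B : ℝ) (hB : 0 < B)
    (hFsum : ∀ x : H, Summable fun i => ‖⟪F i, x⟫‖ ^ 2)
    (hF_upper : ∀ x : H, ∑' i, ‖⟪F i, x⟫‖ ^ 2 ≤ B * ‖x‖ ^ 2)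
    (c : I → ℂ) (hc : Summable fun i => ‖c i‖ ^ 2) :
    Summable fun i => c i • F i := by
  rw [summable_iff_vanishing_norm] at hc ⊢
  intro ε hε
  obtain ⟨s, hs⟩ := hc (ε ^ 2 / B) (by positivity)
  refine ⟨s, fun t ht => ?_⟩
  have h1 := norm_sum_smul_sq_le F B hB hFsum hF_upper c t
  have h2 : ∑ i ∈ t, ‖c i‖ ^ 2 < ε ^ 2 / B := (le_abs_self _).trans_lt (hs t ht)
  rw [lt_div_iff₀ hB, mul_comm] at h2
  exact lt_of_pow_lt_pow_left₀ 2 hε.le (h1.trans_lt h2)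

theorem stmt_0
    {H : Type*} [NormedAddCommGroup H] [InnerProductSpace ℂ H] [CompleteSpace H]
    [TopologicalSpace.SeparableSpace H]
    {I : Type*} [Countable I]
    (K : H →L[ℂ] H) (F g : I → H)
    -- F is a K-frame with bounds A, B
    (A B : ℝ) (hA : 0 < A) (hB : 0 < B)
    (hFsum : ∀ x : H, Summable fun i => ‖⟪F i, x⟫‖ ^ 2)
    (hF_lower : ∀ x : H,
      A * ‖ContinuousLinearMap.adjoint K x‖ ^ 2 ≤ ∑' i, ‖⟪F i, x⟫‖ ^ 2)
    (hF_upper : ∀ x : H, ∑' i, ‖⟪F i, x⟫‖ ^ 2 ≤ B * ‖x‖ ^ 2)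
    -- g is a Bessel sequence
    (C : ℝ) (hC : 0 < C)
    (hgsum : ∀ x : H, Summable fun i => ‖⟪g i, x⟫‖ ^ 2)
    (hg_upper : ∀ x : H, ∑' i, ‖⟪g i, x⟫‖ ^ 2 ≤ C * ‖x‖ ^ 2)
    -- g is a K-dual of F
    (hdual : ∀ x : H, K x = ∑' i, ⟪g i, x⟫ • F i)
    (J : Set I) (x : H) :
    (∑' i : J, ⟪g i, x⟫ * conj ⟪F i, K x⟫)
        - (‖∑' i : J, ⟪g i, x⟫ • F i‖ : ℂ) ^ 2
      = (∑' i : ↥Jᶜ, conj ⟪g i, x⟫ * ⟪F i, K x⟫)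
        - (‖∑' i : ↥Jᶜ, ⟪g i, x⟫ • F i‖ : ℂ) ^ 2 := by
  have hsum : Summable fun i => ⟪g i, x⟫ • F i :=
    summable_smul_of_bessel F B hB hFsum hF_upper _ (hgsum x)
  have hJ : Summable fun i : J => ⟪g i, x⟫ • F i := hsum.subtype J
  have hJc : Summable fun i : ↥Jᶜ => ⟪g i, x⟫ • F i := hsum.subtype Jᶜ
  have hK : K x = (∑' i : J, ⟪g i, x⟫ • F i) + ∑' i : ↥Jᶜ, ⟪g i, x⟫ • F i := by
    rw [hdual x]
    exact (Summable.tsum_add_tsum_compl (f := fun i => ⟪g i, x⟫ • F i) (s := J) hJ hJc).symm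
  have hL : ∑' i : J, ⟪g i, x⟫ * conj ⟪F i, K x⟫ = ⟪K x, ∑' i : J, ⟪g i, x⟫ • F i⟫ := by
    have h := (hJ.hasSum.mapL (innerSL ℂ (K x))).tsum_eq
    simpa only [innerSL_apply_apply, inner_smul_right, inner_conj_symm] using h
  have hR : ∑' i : ↥Jᶜ, conj ⟪g i, x⟫ * ⟪F i, K x⟫
      = ⟪∑' i : ↥Jᶜ, ⟪g i, x⟫ • F i, K x⟫ := by
    have h := congrArg conj (hJc.hasSum.mapL (innerSL ℂ (K x))).tsum_eq
    simpa only [innerSL_apply_apply, inner_smul_right, Complex.conj_tsum, map_mul,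
      inner_conj_symm] using h
  rw [hL, hR, hK]
  generalize (∑' i : J, ⟪g i, x⟫ • F i) = a
  generalize (∑' i : ↥Jᶜ, ⟪g i, x⟫ • F i) = b
  have ha : ⟪a, a⟫ = (‖a‖ : ℂ) ^ 2 := inner_self_eq_norm_sq_to_K a
  have hb : ⟪b, b⟫ = (‖b‖ : ℂ) ^ 2 := inner_self_eq_norm_sq_to_K b
  rw [inner_add_left, inner_add_right, ha, hb]
  ring
end

section
/- Let F = {f_i}_{i∈I} be a K-frame for H and let {g_i}_{i∈I} be a K-dual of F. Then for every bounded family of complex scalars {α_i}_{i∈I} and every f ∈ H, (∑_{i∈I} α_i ⟨f,g_i⟩ · conj(⟨Kf,f_i⟩)) − ‖∑_{i∈I} α_i ⟨f,g_i⟩ f_i‖² = (∑_{i∈I} (1 − conj(α_i)) · conj(⟨f,g_i⟩) · ⟨Kf,f_i⟩) − ‖∑_{i∈I} (1 − α_i) ⟨f,g_i⟩ f_i‖². -/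
/-!
Write `c i = ⟪g i, x⟫`, `u = ∑ α i c i F i` and `w = ∑ (1 - α i) c i F i`, so that `u + w = K x` by
duality. Pulling the inner product out of the series, the first sum is `⟪K x, u⟫` and the second is
`⟪w, K x⟫`, and both sides of the identity reduce to `⟪w, u⟫`.

The analytic content is the convergence of these series: `bessel_summable_smul` shows that the
synthesis series `∑ c i F i` of a Bessel sequence converges for every square-summable `c`, via the
bound `‖∑ c i F i‖² ≤ B ∑ ‖c i‖²` on finite sums.
-/

/- STATEMENT 1: For a K-frame F with K-dual g and a bounded scalar family α,
   (∑ α_i ⟨f,g_i⟩ conj⟨Kf,f_i⟩) − ‖∑ α_i ⟨f,g_i⟩ f_i‖²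
     = (∑ (1−conj α_i) conj⟨f,g_i⟩ ⟨Kf,f_i⟩) − ‖∑ (1−α_i) ⟨f,g_i⟩ f_i‖².
   Paper inner ⟨·,·⟩ is linear in the FIRST argument, so ⟨a, b⟩ = ⟪b, a⟫ (Mathlib). -/

open scoped ComplexConjugate

local notation "⟪" x ", " y "⟫" => @inner ℂ _ _ x y

/-- Finite sums of the synthesis series of a Bessel sequence: with `v = ∑ c i F i`, Cauchy-Schwarz
applied to `‖v‖² = ∑ c i ⟪v, F i⟫` gives `‖v‖⁴ ≤ (∑ ‖c i‖²) B ‖v‖²`. -/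
theorem bessel_norm_sum_sq_le {H I : Type*} [NormedAddCommGroup H] [InnerProductSpace ℂ H]
    (F : I → H) (B : ℝ) (hB : 0 < B) (hFsum : ∀ x : H, Summable fun i => ‖⟪F i, x⟫‖ ^ 2)
    (hF_upper : ∀ x : H, ∑' i, ‖⟪F i, x⟫‖ ^ 2 ≤ B * ‖x‖ ^ 2)
    (c : I → ℂ) (s : Finset I) :
    ‖∑ i ∈ s, c i • F i‖ ^ 2 ≤ (∑ i ∈ s, ‖c i‖ ^ 2) * B := by
  set v := ∑ i ∈ s, c i • F i with hv
  have hS : 0 ≤ ∑ i ∈ s, ‖c i‖ ^ 2 := Finset.sum_nonneg fun i _ => by positivity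
  have h1 : ‖v‖ ^ 2 ≤ ∑ i ∈ s, ‖c i‖ * ‖⟪F i, v⟫‖ := by
    have : ⟪v, v⟫ = ∑ i ∈ s, c i * ⟪v, F i⟫ := by
      conv_lhs => rw [hv, inner_sum]
      exact Finset.sum_congr rfl fun i _ => inner_smul_right _ _ _
    calc ‖v‖ ^ 2 = ‖⟪v, v⟫‖ := by rw [inner_self_eq_norm_sq_to_K]; simp
      _ ≤ ∑ i ∈ s, ‖c i * ⟪v, F i⟫‖ := by rw [this]; exact norm_sum_le _ _
      _ = _ := Finset.sum_congr rfl fun i _ => by rw [norm_mul, norm_inner_symm]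
  have h2 : ∑ i ∈ s, ‖⟪F i, v⟫‖ ^ 2 ≤ B * ‖v‖ ^ 2 :=
    ((hFsum v).sum_le_tsum s fun i _ => by positivity).trans (hF_upper v)
  have h3 : (‖v‖ ^ 2) ^ 2 ≤ (∑ i ∈ s, ‖c i‖ ^ 2) * B * ‖v‖ ^ 2 :=
    calc (‖v‖ ^ 2) ^ 2 ≤ (∑ i ∈ s, ‖c i‖ * ‖⟪F i, v⟫‖) ^ 2 := by gcongr
      _ ≤ (∑ i ∈ s, ‖c i‖ ^ 2) * ∑ i ∈ s, ‖⟪F i, v⟫‖ ^ 2 := Finset.sum_mul_sq_le_sq_mul_sq _ _ _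
      _ ≤ (∑ i ∈ s, ‖c i‖ ^ 2) * (B * ‖v‖ ^ 2) := by gcongr
      _ = _ := by ring
  rcases (sq_nonneg ‖v‖).eq_or_lt with h0 | h0
  · rw [← h0]; positivity
  · rw [sq (‖v‖ ^ 2)] at h3
    exact le_of_mul_le_mul_right h3 h0

theorem bessel_summable_smul {H I : Type*} [NormedAddCommGroup H] [InnerProductSpace ℂ H]
    [CompleteSpace H] (F : I → H) (B : ℝ) (hB : 0 < B)
    (hFsum : ∀ x : H, Summable fun i => ‖⟪F i, x⟫‖ ^ 2)
    (hF_upper : ∀ x : H, ∑' i, ‖⟪F i, x⟫‖ ^ 2 ≤ B * ‖x‖ ^ 2)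
    (c : I → ℂ) (hc : Summable fun i => ‖c i‖ ^ 2) :
    Summable fun i => c i • F i := by
  rw [summable_iff_vanishing_norm] at hc ⊢
  intro ε hε
  obtain ⟨s, hs⟩ := hc (ε ^ 2 / B) (by positivity)
  refine ⟨s, fun t ht => ?_⟩
  have h1 := (le_abs_self _).trans_lt (hs t ht)
  have h2 := bessel_norm_sum_sq_le F B hB hFsum hF_upper c t
  rw [lt_div_iff₀ hB] at h1
  exact lt_of_pow_lt_pow_left₀ 2 hε.le (h2.trans_lt h1)

theorem stmt_1
    {H : Type*} [NormedAddCommGroup H] [InnerProductSpace ℂ H] [CompleteSpace H]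
    [TopologicalSpace.SeparableSpace H]
    {I : Type*} [Countable I]
    (K : H →L[ℂ] H) (F g : I → H)
    -- F is a K-frame with bounds A, B
    (A B : ℝ) (hA : 0 < A) (hB : 0 < B)
    (hFsum : ∀ x : H, Summable fun i => ‖⟪F i, x⟫‖ ^ 2)
    (hF_lower : ∀ x : H,
      A * ‖ContinuousLinearMap.adjoint K x‖ ^ 2 ≤ ∑' i, ‖⟪F i, x⟫‖ ^ 2)
    (hF_upper : ∀ x : H, ∑' i, ‖⟪F i, x⟫‖ ^ 2 ≤ B * ‖x‖ ^ 2)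
    -- g is a Bessel sequence
    (C : ℝ) (hC : 0 < C)
    (hgsum : ∀ x : H, Summable fun i => ‖⟪g i, x⟫‖ ^ 2)
    (hg_upper : ∀ x : H, ∑' i, ‖⟪g i, x⟫‖ ^ 2 ≤ C * ‖x‖ ^ 2)
    -- g is a K-dual of F
    (hdual : ∀ x : H, K x = ∑' i, ⟪g i, x⟫ • F i)
    -- α is a bounded family of scalars
    (α : I → ℂ) (M : ℝ) (hα : ∀ i, ‖α i‖ ≤ M)
    (x : H) :
    (∑' i, α i * ⟪g i, x⟫ * conj ⟪F i, K x⟫)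
        - (‖∑' i, (α i * ⟪g i, x⟫) • F i‖ : ℂ) ^ 2
      = (∑' i, (1 - conj (α i)) * conj ⟪g i, x⟫ * ⟪F i, K x⟫)
        - (‖∑' i, ((1 - α i) * ⟪g i, x⟫) • F i‖ : ℂ) ^ 2 := by
  have hc1 : Summable fun i => ⟪g i, x⟫ • F i :=
    bessel_summable_smul F B hB hFsum hF_upper _ (hgsum x)
  have hu : Summable fun i => (α i * ⟪g i, x⟫) • F i := by
    refine bessel_summable_smul F B hB hFsum hF_upper _ ?_
    refine Summable.of_nonneg_of_le (fun i => by positivity) (fun i => ?_)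
      ((hgsum x).mul_left (M ^ 2))
    rw [norm_mul, mul_pow]
    gcongr
    exact hα i
  have hsub : ∀ i, ((1 - α i) * ⟪g i, x⟫) • F i
      = ⟪g i, x⟫ • F i - (α i * ⟪g i, x⟫) • F i := fun i => by
    rw [← sub_smul]; congr 1; ring
  have hw : Summable fun i => ((1 - α i) * ⟪g i, x⟫) • F i :=
    (hc1.sub hu).congr fun i => (hsub i).symm
  have hK : K x = ∑' i, (α i * ⟪g i, x⟫) • F i + ∑' i, ((1 - α i) * ⟪g i, x⟫) • F i := by
    rw [tsum_congr hsub, hc1.tsum_sub hu, ← hdual x]; abel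
  have h1 : ∑' i, α i * ⟪g i, x⟫ * conj ⟪F i, K x⟫
      = ⟪K x, ∑' i, (α i * ⟪g i, x⟫) • F i⟫ := by
    rw [← (hu.hasSum.mapL (innerSL ℂ (K x))).tsum_eq.trans (innerSL_apply_apply ..)]
    refine tsum_congr fun i => ?_
    rw [innerSL_apply_apply, inner_smul_right, inner_conj_symm]
  have h2 : ∑' i, (1 - conj (α i)) * conj ⟪g i, x⟫ * ⟪F i, K x⟫
      = ⟪∑' i, ((1 - α i) * ⟪g i, x⟫) • F i, K x⟫ := by
    rw [← inner_conj_symm,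
      ← (hw.hasSum.mapL (innerSL ℂ (K x))).tsum_eq.trans (innerSL_apply_apply ..),
      Complex.conj_tsum]
    refine tsum_congr fun i => ?_
    rw [innerSL_apply_apply, inner_smul_right, map_mul, inner_conj_symm]
    simp
  rw [h1, h2, hK]
  generalize ∑' i, (α i * ⟪g i, x⟫) • F i = u
  generalize ∑' i, ((1 - α i) * ⟪g i, x⟫) • F i = w
  have hu2 : ⟪u, u⟫ = (‖u‖ : ℂ) ^ 2 := inner_self_eq_norm_sq_to_K u
  have hw2 : ⟪w, w⟫ = (‖w‖ : ℂ) ^ 2 := inner_self_eq_norm_sq_to_K w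
  rw [← hu2, ← hw2, inner_add_left, inner_add_right]
  ring
end

section
/- Let F = {f_i}_{i∈I} be a Parseval K-frame for H. Then for every f ∈ H, every J ⊆ I and every E ⊆ J^c: ‖∑_{i∈J∪E} ⟨f,f_i⟩ f_i‖² − ‖∑_{i∈J^c∖E} ⟨f,f_i⟩ f_i‖² = ‖∑_{i∈J} ⟨f,f_i⟩ f_i‖² − ‖∑_{i∈J^c} ⟨f,f_i⟩ f_i‖² + 2·Re(∑_{i∈E} ⟨f,f_i⟩ · conj(⟨KK*f,f_i⟩)). -/
/-!
Put `S_A x = ∑_{i ∈ A} ⟨x, F i⟩ F i`. A duality argument with Cauchy-Schwarz and the Parseval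
identity gives `‖∑_{i ∈ s} c i • F i‖² ≤ ‖K*‖² ∑_{i ∈ s} ‖c i‖²` for finite `s`, so each of
these series converges unconditionally (`summable_frame`). The full frame operator `S_I` is linear
and has the same quadratic form as `K K*`, hence `S_I = K K*` by complex polarization
(`tsum_frame`).

With `a = S_J x`, `b = S_{Jᶜ} x`, `e = S_E x`, the two sums on the left are `a + e` and `b - e`,
and `‖a + e‖² - ‖b - e‖² = ‖a‖² - ‖b‖² + 2 Re ⟨e, a + b⟩`, where `a + b = K K* x`.
-/

/- STATEMENT 4: For a Parseval K-frame F, f ∈ H, J ⊆ I and E ⊆ J^c: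
   ‖∑_{J∪E} ⟨f,f_i⟩f_i‖² − ‖∑_{J^c∖E} ⟨f,f_i⟩f_i‖²
     = ‖∑_J ⟨f,f_i⟩f_i‖² − ‖∑_{J^c} ⟨f,f_i⟩f_i‖² + 2·Re ∑_E ⟨f,f_i⟩·conj⟨KK*f,f_i⟩.
   Paper inner ⟨·,·⟩ is linear in the FIRST argument, so ⟨a, b⟩ = ⟪b, a⟫ (Mathlib). -/

open scoped ComplexConjugate

local notation "⟪" x ", " y "⟫" => @inner ℂ _ _ x y

section Frame

variable {H : Type*} [NormedAddCommGroup H] [InnerProductSpace ℂ H] [CompleteSpace H] {I : Type*}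

/-- The synthesis bound: finite combinations of the frame vectors are controlled by the `ℓ²`
norm of the coefficients. -/
lemma norm_sq_sum_le (K : H →L[ℂ] H) (F : I → H)
    (hFsum : ∀ x : H, Summable fun i => ‖⟪F i, x⟫‖ ^ 2)
    (hPar : ∀ x : H, ∑' i, ‖⟪F i, x⟫‖ ^ 2 = ‖ContinuousLinearMap.adjoint K x‖ ^ 2)
    (c : I → ℂ) (s : Finset I) :
    ‖∑ i ∈ s, c i • F i‖ ^ 2
      ≤ ‖ContinuousLinearMap.adjoint K‖ ^ 2 * ∑ i ∈ s, ‖c i‖ ^ 2 := by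
  set y := ∑ i ∈ s, c i • F i with hy
  set M := ‖ContinuousLinearMap.adjoint K‖
  have h1 : ‖y‖ ^ 2 ≤ ∑ i ∈ s, ‖c i‖ * ‖⟪F i, y⟫‖ := by
    have h : ((‖y‖ ^ 2 : ℝ) : ℂ) = ∑ i ∈ s, c i * ⟪y, F i⟫ := by
      have h0 : ⟪y, ∑ i ∈ s, c i • F i⟫ = ∑ i ∈ s, c i * ⟪y, F i⟫ := by
        simp only [inner_sum, inner_smul_right]
      rw [← h0, ← hy, inner_self_eq_norm_sq_to_K]
      simp
    calc ‖y‖ ^ 2 = ‖((‖y‖ ^ 2 : ℝ) : ℂ)‖ := by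
          rw [Complex.norm_real, Real.norm_of_nonneg (by positivity)]
      _ ≤ ∑ i ∈ s, ‖c i * ⟪y, F i⟫‖ := by rw [h]; exact norm_sum_le _ _
      _ = _ := Finset.sum_congr rfl fun i _ => by rw [norm_mul, norm_inner_symm]
  have h2 : ∑ i ∈ s, ‖⟪F i, y⟫‖ ^ 2 ≤ M ^ 2 * ‖y‖ ^ 2 := by
    calc _ ≤ ∑' i, ‖⟪F i, y⟫‖ ^ 2 :=
          (hFsum y).sum_le_tsum s (fun i _ => by positivity)
      _ = ‖ContinuousLinearMap.adjoint K y‖ ^ 2 := hPar y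
      _ ≤ (M * ‖y‖) ^ 2 := by
          gcongr
          exact ContinuousLinearMap.le_opNorm _ _
      _ = _ := by ring
  have h3 := Finset.sum_mul_sq_le_sq_mul_sq s (fun i => ‖c i‖) (fun i => ‖⟪F i, y⟫‖)
  have hC : 0 ≤ ∑ i ∈ s, ‖c i‖ ^ 2 := Finset.sum_nonneg fun i _ => by positivity
  have h4 : ‖y‖ ^ 2 * ‖y‖ ^ 2 ≤ (M ^ 2 * ∑ i ∈ s, ‖c i‖ ^ 2) * ‖y‖ ^ 2 := by
    calc ‖y‖ ^ 2 * ‖y‖ ^ 2 = (‖y‖ ^ 2) ^ 2 := by ring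
      _ ≤ (∑ i ∈ s, ‖c i‖ * ‖⟪F i, y⟫‖) ^ 2 := by gcongr
      _ ≤ (∑ i ∈ s, ‖c i‖ ^ 2) * ∑ i ∈ s, ‖⟪F i, y⟫‖ ^ 2 := h3
      _ ≤ (∑ i ∈ s, ‖c i‖ ^ 2) * (M ^ 2 * ‖y‖ ^ 2) := by gcongr
      _ = _ := by ring
  rcases eq_or_lt_of_le (sq_nonneg ‖y‖) with h0 | h0
  · rw [← h0]; positivity
  · exact le_of_mul_le_mul_right h4 h0

lemma summable_frame (K : H →L[ℂ] H) (F : I → H)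
    (hFsum : ∀ x : H, Summable fun i => ‖⟪F i, x⟫‖ ^ 2)
    (hPar : ∀ x : H, ∑' i, ‖⟪F i, x⟫‖ ^ 2 = ‖ContinuousLinearMap.adjoint K x‖ ^ 2) (x : H) :
    Summable fun i => ⟪F i, x⟫ • F i := by
  rw [summable_iff_vanishing_norm]
  intro ε hε
  set M := ‖ContinuousLinearMap.adjoint K‖
  -- dividing by `M ^ 2 + 1` rather than `M ^ 2` also covers `K = 0`
  obtain ⟨s, hs⟩ := summable_iff_vanishing_norm.1 (hFsum x) (ε ^ 2 / (M ^ 2 + 1)) (by positivity)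
  refine ⟨s, fun t ht => ?_⟩
  have h1 := (le_abs_self _).trans_lt (hs t ht)
  rw [lt_div_iff₀ (by positivity)] at h1
  have h2 := norm_sq_sum_le K F hFsum hPar (fun i => ⟪F i, x⟫) t
  have hC : 0 ≤ ∑ i ∈ t, ‖⟪F i, x⟫‖ ^ 2 := Finset.sum_nonneg fun i _ => by positivity
  refine lt_of_pow_lt_pow_left₀ 2 hε.le ?_
  linarith

/-- The frame operator of a Parseval `K`-frame is `K K*`. -/
lemma tsum_frame (K : H →L[ℂ] H) (F : I → H)
    (hFsum : ∀ x : H, Summable fun i => ‖⟪F i, x⟫‖ ^ 2)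
    (hPar : ∀ x : H, ∑' i, ‖⟪F i, x⟫‖ ^ 2 = ‖ContinuousLinearMap.adjoint K x‖ ^ 2) (x : H) :
    ∑' i, ⟪F i, x⟫ • F i = K (ContinuousLinearMap.adjoint K x) := by
  have hs := summable_frame K F hFsum hPar
  let S : H →ₗ[ℂ] H :=
    { toFun := fun x => ∑' i, ⟪F i, x⟫ • F i
      map_add' := fun x y => by
        simp only [inner_add_right, add_smul]
        exact (hs x).tsum_add (hs y)
      map_smul' := fun c x => by
        simp only [inner_smul_right, mul_smul, RingHom.id_apply]
        exact (hs x).tsum_const_smul c }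
  have hST : S = (K ∘L ContinuousLinearMap.adjoint K : H →L[ℂ] H).toLinearMap := by
    rw [← ext_inner_map]
    intro y
    rw [← inner_conj_symm]
    have h1 : ⟪y, S y⟫ = ((‖ContinuousLinearMap.adjoint K y‖ ^ 2 : ℝ) : ℂ) := by
      change innerSL ℂ y (∑' i, ⟪F i, y⟫ • F i) = _
      rw [(innerSL ℂ y).map_tsum (hs y), ← hPar y, Complex.ofReal_tsum]
      refine tsum_congr fun i => ?_
      rw [innerSL_apply_apply, inner_smul_right, ← inner_conj_symm y (F i), RCLike.mul_conj]
      simp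
    have h2 : ⟪K (ContinuousLinearMap.adjoint K y), y⟫
        = ((‖ContinuousLinearMap.adjoint K y‖ ^ 2 : ℝ) : ℂ) := by
      rw [← ContinuousLinearMap.adjoint_inner_right, inner_self_eq_norm_sq_to_K]
      simp
    rw [h1, Complex.conj_ofReal]
    exact h2.symm
  exact congrArg (fun T : H →ₗ[ℂ] H => T x) hST

end Frame

theorem stmt_4
    {H : Type*} [NormedAddCommGroup H] [InnerProductSpace ℂ H] [CompleteSpace H]
    [TopologicalSpace.SeparableSpace H]
    {I : Type*} [Countable I]
    (K : H →L[ℂ] H) (F : I → H)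
    -- F is a Parseval K-frame
    (hFsum : ∀ x : H, Summable fun i => ‖⟪F i, x⟫‖ ^ 2)
    (hPar : ∀ x : H, ∑' i, ‖⟪F i, x⟫‖ ^ 2 = ‖ContinuousLinearMap.adjoint K x‖ ^ 2)
    (x : H) (J E : Set I) (hE : E ⊆ Jᶜ) :
    ‖∑' i : ↥(J ∪ E), ⟪F i, x⟫ • F i‖ ^ 2 - ‖∑' i : ↥(Jᶜ \ E), ⟪F i, x⟫ • F i‖ ^ 2
      = ‖∑' i : J, ⟪F i, x⟫ • F i‖ ^ 2 - ‖∑' i : ↥Jᶜ, ⟪F i, x⟫ • F i‖ ^ 2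
        + 2 * (∑' i : E,
            ⟪F i, x⟫ * conj ⟪F i, K (ContinuousLinearMap.adjoint K x)⟫).re := by
  have hs := summable_frame K F hFsum hPar x
  have hJE : Disjoint J E := (Set.subset_compl_iff_disjoint_left.1 hE)
  have h1 := (hs.subtype J).tsum_union_disjoint hJE (hs.subtype E)
  have h2 := (hs.subtype (Jᶜ \ E : Set I)).tsum_union_disjoint Set.disjoint_sdiff_left (hs.subtype E)
  rw [Set.sdiff_union_of_subset hE] at h2
  have h3 := hs.tsum_subtype_add_tsum_subtype_compl J
  rw [tsum_frame K F hFsum hPar x] at h3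
  have h4 : ∑' i : E, ⟪F i, x⟫ * conj ⟪F i, K (ContinuousLinearMap.adjoint K x)⟫
      = ⟪K (ContinuousLinearMap.adjoint K x), ∑' i : E, ⟪F i, x⟫ • F i⟫ := by
    have hsE : Summable fun i : E => ⟪F i, x⟫ • F i := hs.subtype E
    rw [← innerSL_apply_apply ℂ, (innerSL ℂ _).map_tsum hsE]
    refine tsum_congr fun i => ?_
    rw [innerSL_apply_apply, inner_smul_right, inner_conj_symm]
  rw [h4, h1, h2, ← h3, inner_add_left, Complex.add_re]
  have e1 := @norm_add_sq ℂ H _ _ _ (∑' i : J, ⟪F i, x⟫ • F i) (∑' i : E, ⟪F i, x⟫ • F i)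
  have e2 := @norm_add_sq ℂ H _ _ _ (∑' i : ↥(Jᶜ \ E), ⟪F i, x⟫ • F i)
    (∑' i : E, ⟪F i, x⟫ • F i)
  have e3 := @inner_self_eq_norm_sq ℂ H _ _ _ (∑' i : E, ⟪F i, x⟫ • F i)
  rw [h2, inner_add_left, Complex.add_re]
  simp only [RCLike.re_to_complex] at e1 e2 e3
  linarith
end

section
/- Let F = {f_i}_{i∈I} be a Parseval K-frame for H. Then for every J ⊆ I and every f ∈ H: Re(∑_{i∈J^c} ⟨f,f_i⟩ · conj(⟨KK*f,f_i⟩)) + ‖∑_{i∈J} ⟨f,f_i⟩ f_i‖² = Re(∑_{i∈J} ⟨f,f_i⟩ · conj(⟨KK*f,f_i⟩)) + ‖∑_{i∈J^c} ⟨f,f_i⟩ f_i‖², and this common value is greater than or equal to (3/4)‖KK*f‖². -/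
/-!
Write `S = K K*`, `a = ∑_{i ∈ J} ⟨x, f_i⟩ f_i` and `b = ∑_{i ∈ Jᶜ} ⟨x, f_i⟩ f_i`. The analysis operator
`T : H → ℓ²(I)` of the family satisfies `‖T x‖ = ‖K* x‖`, so `T* T = S` by polarization. Applying
`T*` to the expansion of `T x` in the standard basis of `ℓ²(I)` shows that `∑ ⟨x, f_i⟩ f_i` converges
unconditionally to `S x` (`hasSum_frame`), hence `a + b = S x`. The two scalar series are `⟨a, a + b⟩`
and `⟨b, a + b⟩`, so the equality is
`Re⟨b, a + b⟩ + ‖a‖² = Re⟨a, a + b⟩ + ‖b‖²`, and the inequality follows from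
`Re⟨a, a + b⟩ + ‖b‖² - (3/4)‖a + b‖² = (1/4)‖a - b‖²`.
-/


/- STATEMENT 5: For a Parseval K-frame F, J ⊆ I and f ∈ H:
   Re(∑_{J^c} ⟨f,f_i⟩conj⟨KK*f,f_i⟩) + ‖∑_J ⟨f,f_i⟩f_i‖²
     = Re(∑_J ⟨f,f_i⟩conj⟨KK*f,f_i⟩) + ‖∑_{J^c} ⟨f,f_i⟩f_i‖² ≥ (3/4)‖KK*f‖².
   Paper inner ⟨·,·⟩ is linear in the FIRST argument, so ⟨a, b⟩ = ⟪b, a⟫ (Mathlib). -/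

open scoped ComplexConjugate

local notation "⟪" x ", " y "⟫" => @inner ℂ _ _ x y

/-- The analysis operator `x ↦ (⟨x, f_i⟩)_i` into `ℓ²(I)`. -/
noncomputable def analysisOp
    {H : Type*} [NormedAddCommGroup H] [InnerProductSpace ℂ H] [CompleteSpace H] {I : Type*}
    (K : H →L[ℂ] H) (F : I → H)
    (hFsum : ∀ x : H, Summable fun i => ‖⟪F i, x⟫‖ ^ 2)
    (hPar : ∀ x : H, ∑' i, ‖⟪F i, x⟫‖ ^ 2 = ‖ContinuousLinearMap.adjoint K x‖ ^ 2) :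
    H →L[ℂ] lp (fun _ : I => ℂ) 2 :=
  LinearMap.mkContinuous
    { toFun := fun x => ⟨fun i => ⟪F i, x⟫, memℓp_gen (by simpa using hFsum x)⟩
      map_add' := fun x y => by ext i; exact inner_add_right _ _ _
      map_smul' := fun c x => by ext i; exact inner_smul_right _ _ _ }
    ‖ContinuousLinearMap.adjoint K‖ (fun x => by
      refine le_trans (le_of_eq ?_) ((ContinuousLinearMap.adjoint K).le_opNorm x)
      rw [← sq_eq_sq₀ (norm_nonneg _) (norm_nonneg _), ← hPar x]
      have h := lp.norm_rpow_eq_tsum (p := 2) (by norm_num)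
        (⟨fun i => ⟪F i, x⟫, memℓp_gen (by simpa using hFsum x)⟩ : lp (fun _ : I => ℂ) 2)
      simpa using h)

theorem hasSum_frame
    {H : Type*} [NormedAddCommGroup H] [InnerProductSpace ℂ H] [CompleteSpace H] {I : Type*}
    (K : H →L[ℂ] H) (F : I → H)
    (hFsum : ∀ x : H, Summable fun i => ‖⟪F i, x⟫‖ ^ 2)
    (hPar : ∀ x : H, ∑' i, ‖⟪F i, x⟫‖ ^ 2 = ‖ContinuousLinearMap.adjoint K x‖ ^ 2) (x : H) :
    HasSum (fun i => ⟪F i, x⟫ • F i) (K (ContinuousLinearMap.adjoint K x)) := by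
  classical
  set T := analysisOp K F hFsum hPar with hT
  have hTi : ∀ y i, T y i = ⟪F i, y⟫ := fun _ _ => rfl
  have hnorm : ∀ y, ‖T y‖ ^ 2 = ‖ContinuousLinearMap.adjoint K y‖ ^ 2 := fun y => by
    have h := lp.norm_rpow_eq_tsum (p := 2) (by norm_num) (T y)
    rw [← hPar y]
    simpa [hTi] using h
  have hsingle : ∀ i (c : ℂ), ContinuousLinearMap.adjoint T (lp.single 2 i c) = c • F i := by
    intro i c
    refine ext_inner_right ℂ fun y => ?_
    rw [ContinuousLinearMap.adjoint_inner_left, lp.inner_single_left, hTi, inner_smul_left]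
    simp [mul_comm]
  -- Over `ℂ` the quadratic form `y ↦ ⟨A y, y⟩` determines the operator `A`.
  have hTT : (ContinuousLinearMap.adjoint T ∘L T : H →L[ℂ] H)
      = K ∘L ContinuousLinearMap.adjoint K := by
    apply ContinuousLinearMap.coe_injective
    rw [← ext_inner_map]
    intro y
    have h1 : ⟪ContinuousLinearMap.adjoint T (T y), y⟫ = ((‖T y‖ ^ 2 : ℝ) : ℂ) := by
      rw [ContinuousLinearMap.adjoint_inner_left, inner_self_eq_norm_sq_to_K]
      simp
    have h2 : ⟪K (ContinuousLinearMap.adjoint K y), y⟫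
        = ((‖ContinuousLinearMap.adjoint K y‖ ^ 2 : ℝ) : ℂ) := by
      rw [← ContinuousLinearMap.adjoint_inner_right, inner_self_eq_norm_sq_to_K]
      simp
    simpa using (h1.trans (by rw [hnorm y])).trans h2.symm
  have hs := (lp.hasSum_single (p := 2) (by norm_num) (T x)).mapL (ContinuousLinearMap.adjoint T)
  have hval : ContinuousLinearMap.adjoint T (T x) = K (ContinuousLinearMap.adjoint K x) :=
    DFunLike.congr_fun hTT x
  rw [hval] at hs
  simpa [hsingle, hTi] using hs

theorem tsum_coeff_eq_inner
    {H : Type*} [NormedAddCommGroup H] [InnerProductSpace ℂ H] {I : Type*}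
    (F : I → H) (J : Set I) (x s : H) (h : Summable fun i : J => ⟪F i, x⟫ • F i) :
    ∑' i : J, ⟪F i, x⟫ * conj ⟪F i, s⟫ = ⟪s, ∑' i : J, ⟪F i, x⟫ • F i⟫ := by
  rw [← innerSL_apply_apply ℂ s, ContinuousLinearMap.map_tsum _ h]
  refine tsum_congr fun i => ?_
  rw [innerSL_apply_apply, inner_smul_right, inner_conj_symm]

theorem re_inner_add_identity
    {H : Type*} [NormedAddCommGroup H] [InnerProductSpace ℂ H] (a b : H) :
    (⟪a + b, b⟫).re + ‖a‖ ^ 2 = (⟪a + b, a⟫).re + ‖b‖ ^ 2 ∧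
    (3 / 4 : ℝ) * ‖a + b‖ ^ 2 ≤ (⟪a + b, a⟫).re + ‖b‖ ^ 2 := by
  have haa : (⟪a, a⟫).re = ‖a‖ ^ 2 := inner_self_eq_norm_sq (𝕜 := ℂ) a
  have hbb : (⟪b, b⟫).re = ‖b‖ ^ 2 := inner_self_eq_norm_sq (𝕜 := ℂ) b
  have hba : (⟪b, a⟫).re = (⟪a, b⟫).re := inner_re_symm (𝕜 := ℂ) b a
  have hadd : ‖a + b‖ ^ 2 = ‖a‖ ^ 2 + 2 * (⟪a, b⟫).re + ‖b‖ ^ 2 := norm_add_sq (𝕜 := ℂ) a b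
  have hsub : ‖a - b‖ ^ 2 = ‖a‖ ^ 2 - 2 * (⟪a, b⟫).re + ‖b‖ ^ 2 := norm_sub_sq (𝕜 := ℂ) a b
  simp only [inner_add_left, Complex.add_re, haa, hbb, hba, hadd]
  constructor
  · ring
  · linarith [sq_nonneg ‖a - b‖]

theorem stmt_5
    {H : Type*} [NormedAddCommGroup H] [InnerProductSpace ℂ H] [CompleteSpace H]
    [TopologicalSpace.SeparableSpace H]
    {I : Type*} [Countable I]
    (K : H →L[ℂ] H) (F : I → H)
    -- F is a Parseval K-frame
    (hFsum : ∀ x : H, Summable fun i => ‖⟪F i, x⟫‖ ^ 2)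
    (hPar : ∀ x : H, ∑' i, ‖⟪F i, x⟫‖ ^ 2 = ‖ContinuousLinearMap.adjoint K x‖ ^ 2)
    (J : Set I) (x : H) :
    (∑' i : ↥Jᶜ, ⟪F i, x⟫ * conj ⟪F i, K (ContinuousLinearMap.adjoint K x)⟫).re
        + ‖∑' i : J, ⟪F i, x⟫ • F i‖ ^ 2
      = (∑' i : J, ⟪F i, x⟫ * conj ⟪F i, K (ContinuousLinearMap.adjoint K x)⟫).re
        + ‖∑' i : ↥Jᶜ, ⟪F i, x⟫ • F i‖ ^ 2 ∧
    (3 / 4 : ℝ) * ‖K (ContinuousLinearMap.adjoint K x)‖ ^ 2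
      ≤ (∑' i : J, ⟪F i, x⟫ * conj ⟪F i, K (ContinuousLinearMap.adjoint K x)⟫).re
        + ‖∑' i : ↥Jᶜ, ⟪F i, x⟫ • F i‖ ^ 2 := by
  have hsum := hasSum_frame K F hFsum hPar x
  have hJ : Summable fun i : J => ⟪F i, x⟫ • F i := hsum.summable.subtype J
  have hJc : Summable fun i : ↥Jᶜ => ⟪F i, x⟫ • F i := hsum.summable.subtype Jᶜ
  have hab : (∑' i : J, ⟪F i, x⟫ • F i) + (∑' i : ↥Jᶜ, ⟪F i, x⟫ • F i)
      = K (ContinuousLinearMap.adjoint K x) :=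
    (hsum.summable.tsum_subtype_add_tsum_subtype_compl J).trans hsum.tsum_eq
  rw [tsum_coeff_eq_inner F J x _ hJ, tsum_coeff_eq_inner F Jᶜ x _ hJc, ← hab]
  exact re_inner_add_identity _ _
end

section
/- Let F = {f_i}_{i∈I} be a Parseval K-frame for H and J ⊆ I. Then, in the Loewner order on bounded operators on H: S_J² + S_{J^c}² ≥ (1/2)(KK*)², and KK*S_J + S_J KK* + 2 S_{J^c}² ≥ (3/2)(KK*)². -/
/-!
Write `T = K K*`. The Parseval identity makes `F` a Bessel family, so the series
`∑ ⟪F i, x⟫ • F i` converges unconditionally (`summable_frame_series`), and its quadratic form is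
`∑ ‖⟪F i, x⟫‖ ^ 2` over any index subset (`inner_frame_series`). Hence `S_J` and `S_{Jᶜ}` are
self-adjoint, and polarization of the Parseval identity gives `S_J + S_{Jᶜ} = T`.
After this substitution both differences in the theorem equal `(1/2) (S_J - S_{Jᶜ})²`, one half of
the square of a self-adjoint operator.
-/

/- STATEMENT 6: For a Parseval K-frame F and J ⊆ I, in the Loewner order
   (A ≤ B iff B − A is a positive operator):
   S_J² + S_{J^c}² ≥ (1/2)(KK*)²  and  KK*S_J + S_J KK* + 2 S_{J^c}² ≥ (3/2)(KK*)². -/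

local notation "⟪" x ", " y "⟫" => @inner ℂ _ _ x y

/-- The synthesis bound of a Bessel family. It is the dual of the analysis bound, obtained by
pairing `v = ∑ c i • F i` with itself and using the Cauchy–Schwarz inequality. -/
lemma norm_sq_synthesis_le {H : Type*} [NormedAddCommGroup H] [InnerProductSpace ℂ H]
    {I : Type*} (F : I → H) (C : ℝ) (hC : 0 ≤ C)
    (hB : ∀ (x : H) (s : Finset I), ∑ i ∈ s, ‖⟪F i, x⟫‖ ^ 2 ≤ C * ‖x‖ ^ 2)
    (c : I → ℂ) (s : Finset I) :
    ‖∑ i ∈ s, c i • F i‖ ^ 2 ≤ C * ∑ i ∈ s, ‖c i‖ ^ 2 := by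
  set v := ∑ i ∈ s, c i • F i with hv
  have h1 : ‖v‖ ^ 2 ≤ ∑ i ∈ s, ‖c i‖ * ‖⟪F i, v⟫‖ := by
    have h : ⟪v, v⟫ = ∑ i ∈ s, c i * ⟪v, F i⟫ := by
      conv_lhs => rw [hv, inner_sum, ← hv]
      simp only [inner_smul_right]
    calc ‖v‖ ^ 2 = ‖⟪v, v⟫‖ := by rw [inner_self_eq_norm_sq_to_K]; simp
      _ ≤ ∑ i ∈ s, ‖c i * ⟪v, F i⟫‖ := by rw [h]; exact norm_sum_le _ _
      _ = _ := by simp only [norm_mul, norm_inner_symm v]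
  have h2 := Finset.sum_mul_sq_le_sq_mul_sq s (fun i => ‖c i‖) (fun i => ‖⟪F i, v⟫‖)
  have hc : 0 ≤ ∑ i ∈ s, ‖c i‖ ^ 2 := by positivity
  have h3 : (‖v‖ ^ 2) * ‖v‖ ^ 2 ≤ (C * ∑ i ∈ s, ‖c i‖ ^ 2) * ‖v‖ ^ 2 := by
    calc (‖v‖ ^ 2) * ‖v‖ ^ 2 = (‖v‖ ^ 2) ^ 2 := by ring
      _ ≤ (∑ i ∈ s, ‖c i‖ * ‖⟪F i, v⟫‖) ^ 2 := by gcongr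
      _ ≤ (∑ i ∈ s, ‖c i‖ ^ 2) * (C * ‖v‖ ^ 2) :=
          h2.trans (mul_le_mul_of_nonneg_left (hB v s) hc)
      _ = _ := by ring
  rcases eq_or_ne v 0 with h0 | h0
  · rw [h0, norm_zero, zero_pow two_ne_zero]
    positivity
  · exact le_of_mul_le_mul_right h3 (by positivity)

lemma summable_frame_series {H : Type*} [NormedAddCommGroup H] [InnerProductSpace ℂ H]
    [CompleteSpace H] {I : Type*} (F : I → H) (C : ℝ) (hC : 0 ≤ C)
    (hFsum : ∀ x : H, Summable fun i => ‖⟪F i, x⟫‖ ^ 2)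
    (hB : ∀ (x : H) (s : Finset I), ∑ i ∈ s, ‖⟪F i, x⟫‖ ^ 2 ≤ C * ‖x‖ ^ 2) (x : H) :
    Summable fun i => ⟪F i, x⟫ • F i := by
  rw [summable_iff_vanishing_norm]
  intro ε hε
  obtain ⟨s, hs⟩ := summable_iff_vanishing_norm.1 (hFsum x) (ε ^ 2 / (C + 1)) (by positivity)
  refine ⟨s, fun t ht => ?_⟩
  have h1 := (le_abs_self _).trans_lt (hs t ht)
  rw [lt_div_iff₀ (by positivity)] at h1
  have h2 := norm_sq_synthesis_le F C hC hB (fun i => ⟪F i, x⟫) t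
  have h3 : 0 ≤ ∑ i ∈ t, ‖⟪F i, x⟫‖ ^ 2 := by positivity
  exact lt_of_pow_lt_pow_left₀ 2 hε.le (by nlinarith)

lemma inner_frame_series {H : Type*} [NormedAddCommGroup H] [InnerProductSpace ℂ H]
    {I : Type*} (F : I → H) (x : H) (h : Summable fun i => ⟪F i, x⟫ • F i) :
    ⟪x, ∑' i, ⟪F i, x⟫ • F i⟫ = ((∑' i, ‖⟪F i, x⟫‖ ^ 2 : ℝ) : ℂ) := by
  rw [← innerSL_apply_apply ℂ, ContinuousLinearMap.map_tsum _ h, Complex.ofReal_tsum]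
  refine tsum_congr fun i => ?_
  rw [innerSL_apply_apply, inner_smul_right, ← inner_conj_symm x (F i), Complex.mul_conj']
  norm_cast

lemma isSelfAdjoint_of_frame_series {H : Type*} [NormedAddCommGroup H] [InnerProductSpace ℂ H]
    [CompleteSpace H] {I : Type*} (F : I → H) (S : H →L[ℂ] H)
    (h : ∀ x, Summable fun i => ⟪F i, x⟫ • F i)
    (hS : ∀ x : H, S x = ∑' i, ⟪F i, x⟫ • F i) : IsSelfAdjoint S := by
  rw [ContinuousLinearMap.isSelfAdjoint_iff_isSymmetric,
    LinearMap.isSymmetric_iff_inner_map_self_real]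
  intro x
  rw [inner_conj_symm, ContinuousLinearMap.coe_coe, ← inner_conj_symm (S x) x, hS,
    inner_frame_series F x (h x), Complex.conj_ofReal]

theorem stmt_6
    {H : Type*} [NormedAddCommGroup H] [InnerProductSpace ℂ H] [CompleteSpace H]
    [TopologicalSpace.SeparableSpace H]
    {I : Type*} [Countable I]
    (K : H →L[ℂ] H) (F : I → H)
    -- F is a Parseval K-frame
    (hFsum : ∀ x : H, Summable fun i => ‖⟪F i, x⟫‖ ^ 2)
    (hPar : ∀ x : H, ∑' i, ‖⟪F i, x⟫‖ ^ 2 = ‖ContinuousLinearMap.adjoint K x‖ ^ 2)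
    (J : Set I)
    (SJ SJc : H →L[ℂ] H)
    (hSJ : ∀ x : H, SJ x = ∑' i : J, ⟪F i, x⟫ • F i)
    (hSJc : ∀ x : H, SJc x = ∑' i : ↥Jᶜ, ⟪F i, x⟫ • F i) :
    (SJ ∘L SJ + SJc ∘L SJc
      - (1 / 2 : ℝ) • ((K ∘L ContinuousLinearMap.adjoint K)
          ∘L (K ∘L ContinuousLinearMap.adjoint K))).IsPositive ∧
    ((K ∘L ContinuousLinearMap.adjoint K) ∘L SJ
      + SJ ∘L (K ∘L ContinuousLinearMap.adjoint K) + (2 : ℝ) • (SJc ∘L SJc)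
      - (3 / 2 : ℝ) • ((K ∘L ContinuousLinearMap.adjoint K)
          ∘L (K ∘L ContinuousLinearMap.adjoint K))).IsPositive := by
  have hB : ∀ (x : H) (s : Finset I),
      ∑ i ∈ s, ‖⟪F i, x⟫‖ ^ 2 ≤ ‖ContinuousLinearMap.adjoint K‖ ^ 2 * ‖x‖ ^ 2 := by
    intro x s
    refine ((hFsum x).sum_le_tsum s fun i _ => by positivity).trans ?_
    rw [hPar, ← mul_pow]
    gcongr
    exact ContinuousLinearMap.le_opNorm _ _
  have hsum := summable_frame_series F _ (by positivity) hFsum hB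
  have hA : IsSelfAdjoint SJ :=
    isSelfAdjoint_of_frame_series (fun i : J => F i) SJ (fun x => (hsum x).subtype J) hSJ
  have hBc : IsSelfAdjoint SJc :=
    isSelfAdjoint_of_frame_series (fun i : ↥Jᶜ => F i) SJc (fun x => (hsum x).subtype Jᶜ) hSJc
  have hadd : ∀ x, (SJ + SJc) x = ∑' i, ⟪F i, x⟫ • F i := fun x => by
    rw [add_apply, hSJ, hSJc]
    exact ((hsum x).subtype J).tsum_add_tsum_compl ((hsum x).subtype Jᶜ)
  have hT : K ∘L ContinuousLinearMap.adjoint K = SJ + SJc := by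
    -- Over `ℂ` an operator is determined by its quadratic form.
    have h : ((K ∘L ContinuousLinearMap.adjoint K : H →L[ℂ] H) : H →ₗ[ℂ] H)
        = ((SJ + SJc : H →L[ℂ] H) : H →ₗ[ℂ] H) := by
      rw [← ext_inner_map]
      intro x
      rw [ContinuousLinearMap.coe_coe, ContinuousLinearMap.coe_coe, ← inner_conj_symm _ x,
        ← inner_conj_symm ((SJ + SJc) x) x, hadd, inner_frame_series F x (hsum x), hPar,
        ContinuousLinearMap.comp_apply, ← ContinuousLinearMap.adjoint_inner_left,
        inner_self_eq_norm_sq_to_K]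
      simp
    exact ContinuousLinearMap.coe_injective h
  have hpos : ((1 / 2 : ℝ) • ((SJ - SJc) * (SJ - SJc))).IsPositive := by
    rw [← ContinuousLinearMap.nonneg_iff_isPositive]
    have h := star_mul_self_nonneg (SJ - SJc)
    rw [(hA.sub hBc).star_eq] at h
    exact smul_nonneg (by norm_num) h
  rw [hT]
  simp only [← ContinuousLinearMap.mul_def]
  constructor
  · convert hpos using 1
    simp only [mul_add, add_mul, mul_sub, sub_mul]
    module
  · convert hpos using 1
    simp only [mul_add, add_mul, mul_sub, sub_mul]
    module
end

section
/- Let F = {f_i}_{i∈I} be a Parseval K-frame for H and suppose c > 0 is a constant such that ‖K*f‖ ≤ c‖KK*f‖ for all f ∈ H (such a c exists, namely c = ‖K†‖, when the range of K is closed). Then for every J ⊆ I and every f ∈ H: Re(∑_{i∈J^c} conj(⟨f,f_i⟩) · ⟨KK*f,f_i⟩) + ‖∑_{i∈J} ⟨f,f_i⟩ f_i‖² ≤ ‖K‖·c·(1 + ‖K‖·c) · ‖KK*f‖². -/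
/-!
Write `A = K*`. The Cauchy–Schwarz inequality and the Parseval identity bound every finite sum
`∑ |⟪F i, x⟫| |⟪F i, y⟫|` by `‖A x‖ ‖A y‖` (`sum_norm_inner_mul_le`).

* With `y = K A x` this bounds the first term by `‖A x‖ ‖A (K A x)‖ ≤ c ‖K‖ ‖K A x‖²`.
* Testing a partial sum of `∑_{i ∈ J} ⟪F i, x⟫ F i` against itself bounds its norm by
  `‖K‖ ‖A x‖ ≤ ‖K‖ c ‖K A x‖` (`norm_sum_smul_le`), hence the second term by
  `(‖K‖ c)² ‖K A x‖²`.

Adding the two gives the constant `‖K‖ c (1 + ‖K‖ c)`. Both bounds hold uniformly for partial sums,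
so they pass to the infinite sums by `norm_tsum_le_of_forall_sum`.
-/


/- STATEMENT 9: For a Parseval K-frame F and c > 0 with ‖K*f‖ ≤ c‖KK*f‖ (all f):
   Re(∑_{J^c} conj⟨f,f_i⟩·⟨KK*f,f_i⟩) + ‖∑_J ⟨f,f_i⟩f_i‖²
     ≤ ‖K‖·c·(1 + ‖K‖·c)·‖KK*f‖².
   Paper inner ⟨·,·⟩ is linear in the FIRST argument, so ⟨a, b⟩ = ⟪b, a⟫ (Mathlib). -/

open scoped ComplexConjugate

local notation "⟪" x ", " y "⟫" => @inner ℂ _ _ x y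

/-- No summability is needed: a non-summable family has `tsum` equal to `0`. -/
lemma norm_tsum_le_of_forall_sum {E ι : Type*} [NormedAddCommGroup E] {f : ι → E} {B : ℝ}
    (h : ∀ s : Finset ι, ‖∑ i ∈ s, f i‖ ≤ B) : ‖∑' i, f i‖ ≤ B := by
  by_cases hf : Summable f
  · exact le_of_tendsto hf.hasSum.norm (Filter.Eventually.of_forall h)
  · rw [tsum_eq_zero_of_not_summable hf]
    simpa using h ∅

section ParsevalKFrame

variable {H : Type*} [NormedAddCommGroup H] [InnerProductSpace ℂ H] [CompleteSpace H]
  {I : Type*} {K : H →L[ℂ] H} {F : I → H}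

lemma sum_norm_inner_mul_le
    (hFsum : ∀ x : H, Summable fun i => ‖⟪F i, x⟫‖ ^ 2)
    (hPar : ∀ x : H, ∑' i, ‖⟪F i, x⟫‖ ^ 2 = ‖ContinuousLinearMap.adjoint K x‖ ^ 2)
    (J : Set I) (s : Finset J) (x y : H) :
    ∑ i ∈ s, ‖⟪F i, x⟫‖ * ‖⟪F i, y⟫‖
      ≤ ‖ContinuousLinearMap.adjoint K x‖ * ‖ContinuousLinearMap.adjoint K y‖ := by
  have key : ∀ z : H, √(∑ i ∈ s, ‖⟪F i, z⟫‖ ^ 2) ≤ ‖ContinuousLinearMap.adjoint K z‖ := by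
    intro z
    refine Real.sqrt_le_iff.mpr ⟨norm_nonneg _, ?_⟩
    rw [← hPar z]
    have h := (hFsum z).sum_le_tsum (s.map (Function.Embedding.subtype (· ∈ J)))
      (fun i _ => by positivity)
    rwa [Finset.sum_map] at h
  calc ∑ i ∈ s, ‖⟪F i, x⟫‖ * ‖⟪F i, y⟫‖
      ≤ √(∑ i ∈ s, ‖⟪F i, x⟫‖ ^ 2) * √(∑ i ∈ s, ‖⟪F i, y⟫‖ ^ 2) :=
        Real.sum_mul_le_sqrt_mul_sqrt s _ _
    _ ≤ _ := mul_le_mul (key x) (key y) (Real.sqrt_nonneg _) (norm_nonneg _)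

lemma norm_adjoint_apply_le (K : H →L[ℂ] H) (y : H) :
    ‖ContinuousLinearMap.adjoint K y‖ ≤ ‖K‖ * ‖y‖ := by
  simpa using (ContinuousLinearMap.adjoint K).le_opNorm y

lemma norm_sum_smul_le
    (hFsum : ∀ x : H, Summable fun i => ‖⟪F i, x⟫‖ ^ 2)
    (hPar : ∀ x : H, ∑' i, ‖⟪F i, x⟫‖ ^ 2 = ‖ContinuousLinearMap.adjoint K x‖ ^ 2)
    (J : Set I) (s : Finset J) (x : H) :
    ‖∑ i ∈ s, ⟪F i, x⟫ • F i‖ ≤ ‖K‖ * ‖ContinuousLinearMap.adjoint K x‖ := by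
  set v := ∑ i ∈ s, ⟪F i, x⟫ • F i with hv
  have hself : ‖v‖ * ‖v‖ ≤ ‖K‖ * ‖ContinuousLinearMap.adjoint K x‖ * ‖v‖ :=
    calc ‖v‖ * ‖v‖ = ‖⟪v, v⟫‖ := by
          rw [inner_self_eq_norm_sq_to_K]; simp [sq]
      _ = ‖∑ i ∈ s, conj ⟪F i, x⟫ * ⟪F i, v⟫‖ := by
          conv_lhs => rw [hv, sum_inner]
          simp only [inner_smul_left, ← hv]
      _ ≤ ∑ i ∈ s, ‖⟪F i, x⟫‖ * ‖⟪F i, v⟫‖ := by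
          refine (norm_sum_le _ _).trans_eq ?_
          simp only [norm_mul, RCLike.norm_conj]
      _ ≤ ‖ContinuousLinearMap.adjoint K x‖ * ‖ContinuousLinearMap.adjoint K v‖ :=
          sum_norm_inner_mul_le hFsum hPar J s x v
      _ ≤ ‖ContinuousLinearMap.adjoint K x‖ * (‖K‖ * ‖v‖) := by
          gcongr; exact norm_adjoint_apply_le K v
      _ = _ := by ring
  rcases (norm_nonneg v).eq_or_lt with h0 | h0
  · rw [← h0]; positivity
  · exact le_of_mul_le_mul_right hself h0

end ParsevalKFrame

theorem stmt_9
    {H : Type*} [NormedAddCommGroup H] [InnerProductSpace ℂ H] [CompleteSpace H]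
    [TopologicalSpace.SeparableSpace H]
    {I : Type*} [Countable I]
    (K : H →L[ℂ] H) (F : I → H)
    -- F is a Parseval K-frame
    (hFsum : ∀ x : H, Summable fun i => ‖⟪F i, x⟫‖ ^ 2)
    (hPar : ∀ x : H, ∑' i, ‖⟪F i, x⟫‖ ^ 2 = ‖ContinuousLinearMap.adjoint K x‖ ^ 2)
    (c : ℝ) (hc : 0 < c)
    (hcK : ∀ x : H, ‖ContinuousLinearMap.adjoint K x‖
      ≤ c * ‖K (ContinuousLinearMap.adjoint K x)‖)
    (J : Set I) (x : H) :
    (∑' i : ↥Jᶜ, conj ⟪F i, x⟫ * ⟪F i, K (ContinuousLinearMap.adjoint K x)⟫).re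
        + ‖∑' i : J, ⟪F i, x⟫ • F i‖ ^ 2
      ≤ ‖K‖ * c * (1 + ‖K‖ * c) * ‖K (ContinuousLinearMap.adjoint K x)‖ ^ 2 := by
  have hx := hcK x
  set y := K (ContinuousLinearMap.adjoint K x) with hy
  have h1 : ‖∑' i : ↥Jᶜ, conj ⟪F i, x⟫ * ⟪F i, y⟫‖ ≤ (c * ‖y‖) * (‖K‖ * ‖y‖) := by
    refine norm_tsum_le_of_forall_sum fun s => ?_
    calc ‖∑ i ∈ s, conj ⟪F i, x⟫ * ⟪F i, y⟫‖
        ≤ ∑ i ∈ s, ‖⟪F i, x⟫‖ * ‖⟪F i, y⟫‖ := by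
          refine (norm_sum_le _ _).trans_eq ?_
          simp only [norm_mul, RCLike.norm_conj]
      _ ≤ _ := sum_norm_inner_mul_le hFsum hPar Jᶜ s x y
      _ ≤ _ := mul_le_mul hx (norm_adjoint_apply_le K y) (norm_nonneg _) (by positivity)
  have h2 : ‖∑' i : J, ⟪F i, x⟫ • F i‖ ≤ ‖K‖ * (c * ‖y‖) :=
    norm_tsum_le_of_forall_sum fun s => (norm_sum_smul_le hFsum hPar J s x).trans (by gcongr)
  have h3 := pow_le_pow_left₀ (norm_nonneg _) h2 2
  have h4 := (Complex.re_le_norm _).trans h1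
  calc _ ≤ (c * ‖y‖) * (‖K‖ * ‖y‖) + (‖K‖ * (c * ‖y‖)) ^ 2 := add_le_add h4 h3
    _ = _ := by ring
end

section
/- Let F = {f_i}_{i∈I} be a Parseval K-frame for H and J ⊆ I. Then in the Loewner order on bounded operators on H: (1/2)(KK*)² ≤ S_J² + S_{J^c}² ≤ 2‖K‖²·KK* − (1/2)(KK*)². -/
/-!
Write `T = K K*`, `A = S_J`, `B = S_{J^c}`. The family is Bessel with bound `‖K‖²`, hence so are its
restrictions to `J` and `J^c`; the synthesis estimate `norm_sq_sum_smul_le` then makes the series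
defining `A` and `B` converge, shows that both operators are self-adjoint, and gives
`‖A x‖² ≤ ‖K‖² ⟨A x, x⟩` and likewise for `B`. Comparing quadratic forms, the Parseval identity says
`A + B = T`.

The lower bound is the identity `A² + B² - T²/2 = (A - B)²/2`. For the upper bound,
`A² + B² ≤ ‖K‖² (A + B) = ‖K‖² T` and `T² ≤ ‖K‖² T`, so
`A² + B² + T²/2 ≤ (3/2) ‖K‖² T ≤ 2 ‖K‖² T`.
-/

local notation "⟪" x ", " y "⟫" => @inner ℂ _ _ x y

/-- Synthesis estimate: a Bessel bound `M` on the analysis coefficients bounds the square of the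
norm of a finite linear combination by `M` times the `ℓ²` norm squared of its coefficients. -/
lemma norm_sq_sum_smul_le {H : Type*} [NormedAddCommGroup H] [InnerProductSpace ℂ H]
    {ι : Type*} (G : ι → H) (M : ℝ) (hM : 0 ≤ M)
    (hB : ∀ (s : Finset ι) (x : H), ∑ i ∈ s, ‖⟪G i, x⟫‖ ^ 2 ≤ M * ‖x‖ ^ 2)
    (s : Finset ι) (c : ι → ℂ) :
    ‖∑ i ∈ s, c i • G i‖ ^ 2 ≤ M * ∑ i ∈ s, ‖c i‖ ^ 2 := by
  set v := ∑ i ∈ s, c i • G i with hv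
  have h1 : ‖v‖ ^ 2 ≤ ∑ i ∈ s, ‖c i‖ * ‖⟪G i, v⟫‖ := by
    have h : ⟪v, v⟫ = ∑ i ∈ s, (starRingEnd ℂ) (c i) * ⟪G i, v⟫ := by
      conv_lhs => rw [hv, sum_inner]
      simp only [inner_smul_left, ← hv]
    have h' : ‖v‖ ^ 2 = ‖⟪v, v⟫‖ := by
      rw [inner_self_eq_norm_sq_to_K]; simp
    rw [h', h]
    refine (norm_sum_le _ _).trans (le_of_eq ?_)
    simp
  have h2 : (‖v‖ ^ 2) ^ 2 ≤ (∑ i ∈ s, ‖c i‖ ^ 2) * (M * ‖v‖ ^ 2) := by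
    calc (‖v‖ ^ 2) ^ 2 ≤ (∑ i ∈ s, ‖c i‖ * ‖⟪G i, v⟫‖) ^ 2 := by gcongr
      _ ≤ (∑ i ∈ s, ‖c i‖ ^ 2) * ∑ i ∈ s, ‖⟪G i, v⟫‖ ^ 2 :=
        Finset.sum_mul_sq_le_sq_mul_sq _ _ _
      _ ≤ _ := mul_le_mul_of_nonneg_left (hB s v) (Finset.sum_nonneg fun _ _ => sq_nonneg _)
  rcases eq_or_ne v 0 with h0 | h0
  · rw [h0, norm_zero]
    have : 0 ≤ ∑ i ∈ s, ‖c i‖ ^ 2 := Finset.sum_nonneg fun _ _ => sq_nonneg _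
    simpa using mul_nonneg hM this
  · have hp : 0 < ‖v‖ ^ 2 := by positivity
    refine le_of_mul_le_mul_right ?_ hp
    linarith

/-- The frame operator of a Bessel family with bound `M` is self-adjoint, its quadratic form is the
sum of the squared coefficients, and `S² ≤ M S` (in terms of quadratic forms). -/
lemma frameOperator_props {H : Type*} [NormedAddCommGroup H] [InnerProductSpace ℂ H]
    [CompleteSpace H] {ι : Type*} (G : ι → H) (M : ℝ) (hM : 0 ≤ M)
    (hsum : ∀ x : H, Summable fun i => ‖⟪G i, x⟫‖ ^ 2)
    (hle : ∀ x : H, ∑' i, ‖⟪G i, x⟫‖ ^ 2 ≤ M * ‖x‖ ^ 2)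
    (S : H →L[ℂ] H) (hS : ∀ x : H, S x = ∑' i, ⟪G i, x⟫ • G i) :
    (∀ x y : H, ⟪S x, y⟫ = ⟪x, S y⟫) ∧
    (∀ x : H, ⟪S x, x⟫ = ((∑' i, ‖⟪G i, x⟫‖ ^ 2 : ℝ) : ℂ)) ∧
    (∀ x : H, ‖S x‖ ^ 2 ≤ M * ∑' i, ‖⟪G i, x⟫‖ ^ 2) := by
  have hB : ∀ (s : Finset ι) (x : H), ∑ i ∈ s, ‖⟪G i, x⟫‖ ^ 2 ≤ M * ‖x‖ ^ 2 := fun s x =>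
    ((hsum x).sum_le_tsum s fun _ _ => sq_nonneg _).trans (hle x)
  have hHas : ∀ x : H, HasSum (fun i => ⟪G i, x⟫ • G i) (S x) := by
    intro x
    rw [hS x]
    refine Summable.hasSum (summable_iff_vanishing_norm.2 fun ε hε => ?_)
    obtain ⟨s, hs⟩ := summable_iff_vanishing_norm.1 (hsum x) (ε ^ 2 / (M + 1)) (by positivity)
    refine ⟨s, fun t ht => ?_⟩
    have h1 := norm_sq_sum_smul_le G M hM hB t fun i => ⟪G i, x⟫
    have h2 := (le_abs_self _).trans_lt (hs t ht)
    have h0 : 0 ≤ ∑ i ∈ t, ‖⟪G i, x⟫‖ ^ 2 := Finset.sum_nonneg fun _ _ => sq_nonneg _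
    rw [lt_div_iff₀ (by positivity)] at h2
    refine lt_of_pow_lt_pow_left₀ 2 hε.le ?_
    linarith
  have hR : ∀ x y : H, HasSum (fun i => ⟪G i, y⟫ * ⟪x, G i⟫) ⟪x, S y⟫ := fun x y => by
    simpa [inner_smul_right] using (innerSL ℂ x).hasSum (hHas y)
  refine ⟨fun x y => ?_, fun x => ?_, fun x => ?_⟩
  · have h := (hR y x).star
    simp only [star_mul', RCLike.star_def, inner_conj_symm] at h
    refine h.unique ?_
    simpa [mul_comm] using hR x y
  · have h := (hR x x).star
    simp only [star_mul', RCLike.star_def, inner_conj_symm] at h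
    refine h.unique ?_
    have h' := Complex.hasSum_ofReal.2 (hsum x).hasSum
    convert h' using 2 with i
    rw [mul_comm, ← inner_conj_symm, RCLike.conj_mul, norm_inner_symm]
    simp
  · have h1 := ((hHas x).norm.pow 2)
    exact le_of_tendsto_of_tendsto h1 ((hsum x).hasSum.const_mul M)
      (Filter.Eventually.of_forall fun s => norm_sq_sum_smul_le G M hM hB s _)

theorem stmt_15
    {H : Type*} [NormedAddCommGroup H] [InnerProductSpace ℂ H] [CompleteSpace H]
    [TopologicalSpace.SeparableSpace H]
    {I : Type*} [Countable I]
    (K : H →L[ℂ] H) (F : I → H)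
    -- F is a Parseval K-frame
    (hFsum : ∀ x : H, Summable fun i => ‖⟪F i, x⟫‖ ^ 2)
    (hPar : ∀ x : H, ∑' i, ‖⟪F i, x⟫‖ ^ 2 = ‖ContinuousLinearMap.adjoint K x‖ ^ 2)
    (J : Set I)
    (SJ SJc : H →L[ℂ] H)
    (hSJ : ∀ x : H, SJ x = ∑' i : J, ⟪F i, x⟫ • F i)
    (hSJc : ∀ x : H, SJc x = ∑' i : ↥Jᶜ, ⟪F i, x⟫ • F i) :
    (SJ ∘L SJ + SJc ∘L SJc
      - (1 / 2 : ℝ) • ((K ∘L ContinuousLinearMap.adjoint K)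
          ∘L (K ∘L ContinuousLinearMap.adjoint K))).IsPositive ∧
    ((2 : ℝ) • ((‖K‖ ^ 2 : ℝ) • (K ∘L ContinuousLinearMap.adjoint K))
      - (1 / 2 : ℝ) • ((K ∘L ContinuousLinearMap.adjoint K)
          ∘L (K ∘L ContinuousLinearMap.adjoint K))
      - (SJ ∘L SJ + SJc ∘L SJc)).IsPositive := by
  have hadj : ∀ x : H, ‖ContinuousLinearMap.adjoint K x‖ ^ 2 ≤ ‖K‖ ^ 2 * ‖x‖ ^ 2 := fun x => by
    rw [← mul_pow]
    have h := (ContinuousLinearMap.adjoint K).le_opNorm x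
    rw [LinearIsometryEquiv.norm_map] at h
    gcongr
  have hsplit : ∀ x : H, ∑' i : J, ‖⟪F i, x⟫‖ ^ 2 + ∑' i : ↥Jᶜ, ‖⟪F i, x⟫‖ ^ 2
      = ‖ContinuousLinearMap.adjoint K x‖ ^ 2 := fun x => by
    rw [← hPar x]
    exact (hFsum x).tsum_subtype_add_tsum_subtype_compl J
  have hnn : ∀ (L : Set I) (x : H), 0 ≤ ∑' i : L, ‖⟪F i, x⟫‖ ^ 2 := fun L x =>
    tsum_nonneg fun _ => sq_nonneg _
  obtain ⟨symA, quadA, bdA⟩ := frameOperator_props (fun i : J => F i) (‖K‖ ^ 2) (sq_nonneg _)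
    (fun x => (hFsum x).subtype J)
    (fun x => by linarith [hsplit x, hadj x, hnn Jᶜ x]) SJ hSJ
  obtain ⟨symB, quadB, bdB⟩ := frameOperator_props (fun i : ↥Jᶜ => F i) (‖K‖ ^ 2) (sq_nonneg _)
    (fun x => (hFsum x).subtype Jᶜ)
    (fun x => by linarith [hsplit x, hadj x, hnn J x]) SJc hSJc
  set T := K ∘L ContinuousLinearMap.adjoint K with hT
  have quadT : ∀ x : H, ⟪T x, x⟫ = ((‖ContinuousLinearMap.adjoint K x‖ ^ 2 : ℝ) : ℂ) := fun x => by
    rw [hT, ContinuousLinearMap.comp_apply, ← ContinuousLinearMap.adjoint_inner_right,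
      inner_self_eq_norm_sq_to_K]
    simp
  -- over `ℂ`, an operator is determined by its quadratic form
  have hAB : T = SJ + SJc := by
    apply ContinuousLinearMap.coe_injective
    refine (ext_inner_map _ _).1 fun x => ?_
    simp only [ContinuousLinearMap.coe_coe, add_apply, inner_add_left]
    rw [quadT, quadA, quadB, ← Complex.ofReal_add, hsplit]
  have bdT : ∀ x : H, ‖T x‖ ^ 2 ≤ ‖K‖ ^ 2 * ‖ContinuousLinearMap.adjoint K x‖ ^ 2 := fun x => by
    rw [← mul_pow]
    have h := K.le_opNorm (ContinuousLinearMap.adjoint K x)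
    rw [hT, ContinuousLinearMap.comp_apply]
    gcongr
  have symT : ∀ x y : H, ⟪T x, y⟫ = ⟪x, T y⟫ := fun x y => by
    simp [hAB, symA, symB]
  have sqA : ∀ x : H, ⟪SJ (SJ x), x⟫ = ((‖SJ x‖ ^ 2 : ℝ) : ℂ) := fun x => by
    rw [symA, inner_self_eq_norm_sq_to_K]; simp
  have sqB : ∀ x : H, ⟪SJc (SJc x), x⟫ = ((‖SJc x‖ ^ 2 : ℝ) : ℂ) := fun x => by
    rw [symB, inner_self_eq_norm_sq_to_K]; simp
  have sqT : ∀ x : H, ⟪T (T x), x⟫ = ((‖T x‖ ^ 2 : ℝ) : ℂ) := fun x => by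
    rw [symT, inner_self_eq_norm_sq_to_K]; simp
  have par : ∀ x : H, ‖T x‖ ^ 2 + ‖SJ x - SJc x‖ ^ 2 = 2 * (‖SJ x‖ ^ 2 + ‖SJc x‖ ^ 2) := fun x => by
    have h := parallelogram_law_with_norm ℂ (SJ x) (SJc x)
    rw [hAB, add_apply]
    linarith
  clear_value T
  rw [ContinuousLinearMap.isPositive_iff_complex, ContinuousLinearMap.isPositive_iff_complex]
  constructor
  · intro x
    have h : ⟪(SJ ∘L SJ + SJc ∘L SJc - (1 / 2 : ℝ) • (T ∘L T)) x, x⟫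
        = ((‖SJ x‖ ^ 2 + ‖SJc x‖ ^ 2 - 1 / 2 * ‖T x‖ ^ 2 : ℝ) : ℂ) := by
      simp only [sub_apply, add_apply,
        smul_apply, ContinuousLinearMap.comp_apply, inner_sub_left,
        inner_add_left, inner_smul_left_eq_smul, sqA, sqB, sqT, Complex.real_smul]
      push_cast
      ring
    rw [h]
    refine ⟨by rw [RCLike.re_eq_complex_re, Complex.ofReal_re], ?_⟩
    rw [RCLike.re_eq_complex_re, Complex.ofReal_re]
    linarith [par x, sq_nonneg ‖SJ x - SJc x‖]
  · intro x
    have h : ⟪((2 : ℝ) • ((‖K‖ ^ 2 : ℝ) • T) - (1 / 2 : ℝ) • (T ∘L T)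
          - (SJ ∘L SJ + SJc ∘L SJc)) x, x⟫
        = ((2 * (‖K‖ ^ 2 * ‖ContinuousLinearMap.adjoint K x‖ ^ 2) - 1 / 2 * ‖T x‖ ^ 2
            - (‖SJ x‖ ^ 2 + ‖SJc x‖ ^ 2) : ℝ) : ℂ) := by
      simp only [sub_apply, add_apply,
        smul_apply, ContinuousLinearMap.comp_apply, inner_sub_left,
        inner_add_left, inner_smul_left_eq_smul, sqA, sqB, sqT, quadT, Complex.real_smul]
      push_cast
      ring
    rw [h]
    refine ⟨by rw [RCLike.re_eq_complex_re, Complex.ofReal_re], ?_⟩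
    rw [RCLike.re_eq_complex_re, Complex.ofReal_re]
    have hAB' : ‖SJ x‖ ^ 2 + ‖SJc x‖ ^ 2
        ≤ ‖K‖ ^ 2 * ‖ContinuousLinearMap.adjoint K x‖ ^ 2 := by
      rw [← hsplit x, mul_add]
      exact add_le_add (bdA x) (bdB x)
    have h0 : 0 ≤ ‖K‖ ^ 2 * ‖ContinuousLinearMap.adjoint K x‖ ^ 2 := by positivity
    linarith [bdT x]
end

section
/- Let K : H → H be a nonzero bounded operator and F = {f_i}_{i∈I} a K-frame for H with synthesis operator T_F : ℓ²(I) → H, T_F({c_i}) = ∑_{i∈I} c_i f_i. Then the optimal lower K-frame bound of F satisfies: sup{α > 0 : α·KK* ≤ T_F T_F* in the Loewner order} = (inf{β > 0 : KK* ≤ β·T_F T_F* in the Loewner order})^{-1}; in particular, if X : H → ℓ²(I) is a bounded operator with T_F ∘ X = K and ‖X‖² = inf{β > 0 : KK* ≤ β·T_F T_F*}, then the optimal lower K-frame bound equals ‖X‖^{-2}. -/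
/-!
The adjoint of the synthesis operator is the analysis operator, so `‖T* x‖² = ∑ |⟪F i, x⟫|²`, and
both Loewner inequalities are pointwise inequalities between `‖K* x‖²` and `‖T* x‖²`. Hence the set
of admissible `α` is also the set of lower `K`-frame bounds, and `β` is admissible exactly when
`β⁻¹` is an admissible `α`. The set of admissible `α` is nonempty (it contains the frame bound `A`)
and bounded above (as `K ≠ 0`), and it contains its supremum `s` because its defining inequalities
are closed; so `s⁻¹` is the least admissible `β`. The second claim follows by substitution.
-/


/- STATEMENT 17: For a nonzero bounded operator K and a K-frame F with synthesis
   operator T (T{c_i} = ∑ c_i f_i):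
   sup{α > 0 : α·KK* ≤ T T* (Loewner)} = (inf{β > 0 : KK* ≤ β·T T* (Loewner)})⁻¹;
   in particular, if X : H → ℓ²(I) is bounded with T ∘ X = K and
   ‖X‖² = inf{β > 0 : KK* ≤ β·T T*}, then the optimal lower K-frame bound
   sup{α > 0 : α‖K*f‖² ≤ ∑ |⟨f,f_i⟩|² for all f} equals ‖X‖⁻².
   Paper inner ⟨·,·⟩ is linear in the FIRST argument, so ⟨a, b⟩ = ⟪b, a⟫ (Mathlib). -/

local notation "⟪" x ", " y "⟫" => @inner ℂ _ _ x y

/-- The scalar core: for nonnegative `k`, `t` with `k` not identically zero, the largest `α` with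
`α k ≤ t` is the inverse of the smallest `β` with `k ≤ β t`. -/
theorem sSup_eq_inv_sInf_of_pointwise {ι : Type*} (k t : ι → ℝ) (hk : ∀ x, 0 ≤ k x)
    (ht : ∀ x, 0 ≤ t x) (x₀ : ι) (hx₀ : k x₀ ≠ 0) (A : ℝ) (hA : 0 < A)
    (hAk : ∀ x, A * k x ≤ t x) :
    sSup {α : ℝ | 0 < α ∧ ∀ x, α * k x ≤ t x}
      = (sInf {β : ℝ | 0 < β ∧ ∀ x, k x ≤ β * t x})⁻¹ := by
  set S := {α : ℝ | 0 < α ∧ ∀ x, α * k x ≤ t x} with hS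
  have hne : S.Nonempty := ⟨A, hA, hAk⟩
  have hub : ∀ x, k x ≠ 0 → ∀ α ∈ S, α ≤ t x / k x := fun x hx α hα =>
    (le_div_iff₀ (lt_of_le_of_ne (hk x) hx.symm)).2 (hα.2 x)
  have hbdd : BddAbove S := ⟨_, hub x₀ hx₀⟩
  have hs : 0 < sSup S := hA.trans_le (le_csSup hbdd ⟨hA, hAk⟩)
  -- The supremum is attained.
  have hmem : ∀ x, sSup S * k x ≤ t x := by
    intro x
    by_cases hx : k x = 0
    · simpa [hx] using ht x
    · exact (le_div_iff₀ (lt_of_le_of_ne (hk x) (Ne.symm hx))).1 (csSup_le hne (hub x hx))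
  have hleast : IsLeast {β : ℝ | 0 < β ∧ ∀ x, k x ≤ β * t x} (sSup S)⁻¹ := by
    refine ⟨⟨inv_pos.2 hs, fun x => (le_inv_mul_iff₀ hs).2 (hmem x)⟩, ?_⟩
    rintro β ⟨hβ, h⟩
    refine inv_le_of_inv_le₀ hβ (le_csSup hbdd ⟨inv_pos.2 hβ, fun x => ?_⟩)
    exact (inv_mul_le_iff₀ hβ).2 (h x)
  rw [hleast.csInf_eq, inv_inv]

/-- A Loewner inequality `b • S S* ≤ a • R R*` tested on vectors. -/
theorem isPositive_smul_sub_smul_iff {H E G : Type*}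
    [NormedAddCommGroup H] [InnerProductSpace ℂ H] [CompleteSpace H]
    [NormedAddCommGroup E] [InnerProductSpace ℂ E] [CompleteSpace E]
    [NormedAddCommGroup G] [InnerProductSpace ℂ G] [CompleteSpace G]
    (R : E →L[ℂ] H) (S : G →L[ℂ] H) (a b : ℝ) :
    (a • (R ∘L ContinuousLinearMap.adjoint R)
      - b • (S ∘L ContinuousLinearMap.adjoint S)).IsPositive ↔
    ∀ x, b * ‖ContinuousLinearMap.adjoint S x‖ ^ 2
      ≤ a * ‖ContinuousLinearMap.adjoint R x‖ ^ 2 := by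
  rw [ContinuousLinearMap.isPositive_iff_complex]
  refine forall_congr' fun x => ?_
  have key : inner ℂ ((a • (R ∘L ContinuousLinearMap.adjoint R)
      - b • (S ∘L ContinuousLinearMap.adjoint S)) x) x
      = ((a * ‖ContinuousLinearMap.adjoint R x‖ ^ 2
        - b * ‖ContinuousLinearMap.adjoint S x‖ ^ 2 : ℝ) : ℂ) := by
    simp only [sub_apply, smul_apply,
      ContinuousLinearMap.comp_apply, inner_sub_left, inner_smul_left_eq_smul,
      ← ContinuousLinearMap.adjoint_inner_right, inner_self_eq_norm_sq_to_K]
    simp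
  rw [key]
  simp [-Complex.ofReal_sub, -Complex.ofReal_mul]

/-- Holds because the adjoint of the synthesis operator is the analysis operator
`x ↦ (⟪F i, x⟫)ᵢ`, as testing against the unit vectors of `ℓ²` shows. -/
theorem norm_sq_adjoint_synthesis {H I : Type*}
    [NormedAddCommGroup H] [InnerProductSpace ℂ H] [CompleteSpace H] (F : I → H)
    (T : lp (fun _ : I => ℂ) 2 →L[ℂ] H)
    (hT : ∀ c : lp (fun _ : I => ℂ) 2, T c = ∑' i, c i • F i) (x : H) :
    ‖ContinuousLinearMap.adjoint T x‖ ^ 2 = ∑' i, ‖⟪F i, x⟫‖ ^ 2 := by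
  classical
  have hcoord : ∀ i, ContinuousLinearMap.adjoint T x i = ⟪F i, x⟫ := by
    intro i
    have h1 : T (lp.single 2 i (1 : ℂ)) = F i := by
      rw [hT, tsum_eq_single i]
      · simp
      · intro j hj
        simp [hj]
    rw [← h1, ← ContinuousLinearMap.adjoint_inner_right, lp.inner_single_left]
    simp
  have h := lp.norm_rpow_eq_tsum (p := 2) (by norm_num) (ContinuousLinearMap.adjoint T x)
  simpa [hcoord] using h

theorem stmt_17
    {H : Type*} [NormedAddCommGroup H] [InnerProductSpace ℂ H] [CompleteSpace H]
    [TopologicalSpace.SeparableSpace H]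
    {I : Type*} [Countable I]
    (K : H →L[ℂ] H) (hK : K ≠ 0) (F : I → H)
    -- F is a K-frame with bounds A, B
    (A B : ℝ) (hA : 0 < A) (hB : 0 < B)
    (hFsum : ∀ x : H, Summable fun i => ‖⟪F i, x⟫‖ ^ 2)
    (hF_lower : ∀ x : H,
      A * ‖ContinuousLinearMap.adjoint K x‖ ^ 2 ≤ ∑' i, ‖⟪F i, x⟫‖ ^ 2)
    (hF_upper : ∀ x : H, ∑' i, ‖⟪F i, x⟫‖ ^ 2 ≤ B * ‖x‖ ^ 2)
    -- T is the synthesis operator of F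
    (T : lp (fun _ : I => ℂ) 2 →L[ℂ] H)
    (hT : ∀ c : lp (fun _ : I => ℂ) 2, T c = ∑' i, c i • F i) :
    sSup {α : ℝ | 0 < α ∧
        (T ∘L ContinuousLinearMap.adjoint T
          - α • (K ∘L ContinuousLinearMap.adjoint K)).IsPositive}
      = (sInf {β : ℝ | 0 < β ∧
          (β • (T ∘L ContinuousLinearMap.adjoint T)
            - K ∘L ContinuousLinearMap.adjoint K).IsPositive})⁻¹ ∧
    ∀ X : H →L[ℂ] lp (fun _ : I => ℂ) 2, T ∘L X = K →
      ‖X‖ ^ 2 = sInf {β : ℝ | 0 < β ∧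
          (β • (T ∘L ContinuousLinearMap.adjoint T)
            - K ∘L ContinuousLinearMap.adjoint K).IsPositive} →
      sSup {α : ℝ | 0 < α ∧ ∀ x : H,
          α * ‖ContinuousLinearMap.adjoint K x‖ ^ 2 ≤ ∑' i, ‖⟪F i, x⟫‖ ^ 2}
        = (‖X‖ ^ 2)⁻¹ := by
  have hnorm := norm_sq_adjoint_synthesis F T hT
  obtain ⟨x₀, hx₀⟩ : ∃ x, ContinuousLinearMap.adjoint K x ≠ 0 := by
    by_contra! h
    apply hK
    have h0 : ContinuousLinearMap.adjoint K = 0 := ContinuousLinearMap.ext h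
    simpa using h0
  have hmain := sSup_eq_inv_sInf_of_pointwise
    (fun x => ‖ContinuousLinearMap.adjoint K x‖ ^ 2) (fun x => ‖ContinuousLinearMap.adjoint T x‖ ^ 2)
    (fun _ => by positivity) (fun _ => by positivity) x₀ (by simpa using hx₀) A hA
    (fun x => by simpa only [hnorm] using hF_lower x)
  have hα : ∀ α : ℝ, (T ∘L ContinuousLinearMap.adjoint T
      - α • (K ∘L ContinuousLinearMap.adjoint K)).IsPositive ↔
      ∀ x, α * ‖ContinuousLinearMap.adjoint K x‖ ^ 2 ≤ ‖ContinuousLinearMap.adjoint T x‖ ^ 2 := by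
    intro α
    simpa only [one_smul, one_mul] using isPositive_smul_sub_smul_iff T K 1 α
  have hβ : ∀ β : ℝ, (β • (T ∘L ContinuousLinearMap.adjoint T)
      - K ∘L ContinuousLinearMap.adjoint K).IsPositive ↔
      ∀ x, ‖ContinuousLinearMap.adjoint K x‖ ^ 2
        ≤ β * ‖ContinuousLinearMap.adjoint T x‖ ^ 2 := by
    intro β
    simpa only [one_smul, one_mul] using isPositive_smul_sub_smul_iff T K β 1
  simp only [hα, hβ]
  refine ⟨hmain, fun X _ hX => ?_⟩
  rw [hX, ← hmain]
  simp only [hnorm]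
end
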